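/- Consider the IQN setup and iteration. There exist positive constants ε and δ such that: if ‖x⁰ − x*‖ < ε and ‖B_i⁰ − ∇²f_i(x*)‖_{M_i} < δ for M_i = ∇²f_i(x*)^{−1/2} and every i = 1,…,n, then for every i = 1,…,n the Dennis–Moré condition holds for f_i along its update steps: writing t_0 < t_1 < t_2 < … for the iterations t at which i_t = i, and s_i^{t_k} = z_i^{t_k+1} − z_i^{t_k}, one has lim_{k→∞} ‖(B_i^{t_k} − ∇²f_i(x*)) s_i^{t_k}‖ / ‖s_i^{t_k}‖ = 0. -/

import Mathlib

open Matrix Filter RealInnerProductSpace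

noncomputable section

abbrev Vec (p : ℕ) := EuclideanSpace ℝ (Fin p)
abbrev Mat (p : ℕ) := Matrix (Fin p) (Fin p) ℝ

/-- A matrix acting on Euclidean space as a linear map. -/
def applyM {p : ℕ} (A : Mat p) (v : Vec p) : Vec p := Matrix.toEuclideanCLM (𝕜 := ℝ) A v

/-- Operator norm of a matrix induced by the Euclidean vector norm. -/
def opNorm {p : ℕ} (A : Mat p) : ℝ := ‖Matrix.toEuclideanCLM (𝕜 := ℝ) A‖

/-- Frobenius norm of a matrix. -/
def frobNorm {p : ℕ} (A : Mat p) : ℝ := Real.sqrt (∑ i, ∑ j, (A i j)^2)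

/-- Weighted matrix norm ‖A‖_M = ‖M A M‖_F. -/
def wNorm {p : ℕ} (M A : Mat p) : ℝ := frobNorm (M * A * M)

/-- Underlying function of a Euclidean vector. -/
def toFn {p : ℕ} (v : Vec p) : Fin p → ℝ := (WithLp.equiv 2 (Fin p → ℝ)) v

/-- Outer product a bᵀ. -/
def outer {p : ℕ} (a b : Vec p) : Mat p := Matrix.vecMulVec (toFn a) (toFn b)

/-- Bilinear form uᵀ B v. -/
def quadForm {p : ℕ} (B : Mat p) (u v : Vec p) : ℝ := toFn u ⬝ᵥ B.mulVec (toFn v)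

/-- Dot product aᵀ b. -/
def dotV {p : ℕ} (a b : Vec p) : ℝ := toFn a ⬝ᵥ toFn b

/-- The BFGS update  B⁺ = B + yyᵀ/(yᵀs) − B s sᵀ B/(sᵀ B s). -/
def bfgsUpdate {p : ℕ} (B : Mat p) (s y : Vec p) : Mat p :=
  B + (dotV y s)⁻¹ • outer y y - (quadForm B s s)⁻¹ • (B * outer s s * B)

/-- `H` is the Hessian (matrix of second derivatives) of `g`. -/
def HasHessian {p : ℕ} (g : Vec p → ℝ) (H : Vec p → Mat p) : Prop :=
  ∀ x, HasFDerivAt (gradient g) (Matrix.toEuclideanCLM (𝕜 := ℝ) (H x) : Vec p →L[ℝ] Vec p) x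

/-- The cyclic index `i_t = (t mod n) + 1` (0-indexed: `t mod n`). -/
def cyc {n : ℕ} (hn : 1 ≤ n) (t : ℕ) : Fin n := ⟨t % n, Nat.mod_lt t hn⟩

/-- The IQN problem data: `n` twice continuously differentiable sample functions
`f i : ℝ^p → ℝ`, `μ`-strongly convex with `L`-Lipschitz gradients and `L̃`-Lipschitz
Hessians, and the optimizer `x*` of `f = (1/n) Σ f i`. -/
structure IQNProblem (p n : ℕ) where
  hp : 1 ≤ p
  hn : 1 ≤ n
  f : Fin n → Vec p → ℝ
  Hess : Fin n → Vec p → Mat p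
  mu : ℝ
  Lg : ℝ
  Ltil : ℝ
  xstar : Vec p
  hmu : 0 < mu
  hmuL : mu ≤ Lg
  hLtil : 0 < Ltil
  hC2 : ∀ i, ContDiff ℝ 2 (f i)
  hHess : ∀ i, HasHessian (f i) (Hess i)
  hlow : ∀ i, ∀ x xh : Vec p,
    mu * ‖x - xh‖^2 ≤ ⟪gradient (f i) x - gradient (f i) xh, x - xh⟫
  hup : ∀ i, ∀ x xh : Vec p,
    ⟪gradient (f i) x - gradient (f i) xh, x - xh⟫ ≤ Lg * ‖x - xh‖^2
  hLip : ∀ i, ∀ u v : Vec p, opNorm (Hess i u - Hess i v) ≤ Ltil * ‖u - v‖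
  hopt : gradient (fun x => (n : ℝ)⁻¹ * ∑ i, f i x) xstar = 0
  hmin : ∀ x : Vec p, (n : ℝ)⁻¹ * ∑ i, f i xstar ≤ (n : ℝ)⁻¹ * ∑ i, f i x

/-- A run of the IQN iteration: sequences `x^t`, `z_i^t` and symmetric matrices `B_i^t`
following the IQN update with cyclic index, all steps assumed well defined. -/
structure IQNState {p n : ℕ} (P : IQNProblem p n) where
  x : ℕ → Vec p
  z : Fin n → ℕ → Vec p
  B : Fin n → ℕ → Mat p
  hz0 : ∀ i, z i 0 = x 0
  hsym : ∀ i t, (B i t).IsSymm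
  hinv : ∀ t, IsUnit ((n : ℝ)⁻¹ • ∑ i, B i t)
  hx : ∀ t, x (t+1) = applyM ((n : ℝ)⁻¹ • ∑ i, B i t)⁻¹
      ((n : ℝ)⁻¹ • ∑ i, applyM (B i t) (z i t) - (n : ℝ)⁻¹ • ∑ i, gradient (P.f i) (z i t))
  hzupd : ∀ t, z (cyc P.hn t) (t+1) = x (t+1)
  hzfix : ∀ t, ∀ j, j ≠ cyc P.hn t → z j (t+1) = z j t
  hs : ∀ t, z (cyc P.hn t) (t+1) - z (cyc P.hn t) t ≠ 0
  hys : ∀ t, dotV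
      (gradient (P.f (cyc P.hn t)) (z (cyc P.hn t) (t+1)) -
        gradient (P.f (cyc P.hn t)) (z (cyc P.hn t) t))
      (z (cyc P.hn t) (t+1) - z (cyc P.hn t) t) ≠ 0
  hsBs : ∀ t, quadForm (B (cyc P.hn t) t)
      (z (cyc P.hn t) (t+1) - z (cyc P.hn t) t)
      (z (cyc P.hn t) (t+1) - z (cyc P.hn t) t) ≠ 0
  hBupd : ∀ t, B (cyc P.hn t) (t+1) = bfgsUpdate (B (cyc P.hn t) t)
      (z (cyc P.hn t) (t+1) - z (cyc P.hn t) t)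
      (gradient (P.f (cyc P.hn t)) (z (cyc P.hn t) (t+1)) -
        gradient (P.f (cyc P.hn t)) (z (cyc P.hn t) t))
  hBfix : ∀ t, ∀ j, j ≠ cyc P.hn t → B j (t+1) = B j t


/-- squared Frobenius norm -/
def Fr {p : ℕ} (A : Mat p) : ℝ := ∑ i, ∑ j, (A i j)^2

lemma Fr_nonneg {p : ℕ} (A : Mat p) : 0 ≤ Fr A :=
  Finset.sum_nonneg fun _ _ => Finset.sum_nonneg fun _ _ => sq_nonneg _

lemma Fr_rank1 {p : ℕ} (A : Mat p) (c : ℝ) (u : Fin p → ℝ) :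
    Fr (A + c • vecMulVec u u) = Fr A + 2 * c * (u ⬝ᵥ A *ᵥ u) + c^2 * (u ⬝ᵥ u)^2 := by
  have h1 : u ⬝ᵥ A *ᵥ u = ∑ i, ∑ j, A i j * (u i * u j) := by
    simp only [dotProduct, mulVec, Finset.mul_sum]
    refine Finset.sum_congr rfl fun i _ => Finset.sum_congr rfl fun j _ => by ring
  have h2 : (u ⬝ᵥ u)^2 = ∑ i, ∑ j, (u i * u j)^2 := by
    rw [sq]
    simp only [dotProduct, Finset.sum_mul_sum]
    refine Finset.sum_congr rfl fun i _ => Finset.sum_congr rfl fun j _ => by ring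
  rw [h1, h2]
  simp only [Fr, Finset.mul_sum, ← Finset.sum_add_distrib]
  refine Finset.sum_congr rfl fun i _ => Finset.sum_congr rfl fun j _ => ?_
  simp [vecMulVec_apply]
  ring

lemma Fr_mulVec {p : ℕ} (A : Mat p) (v : Fin p → ℝ) :
    (A *ᵥ v) ⬝ᵥ (A *ᵥ v) ≤ Fr A * (v ⬝ᵥ v) := by
  unfold Fr
  rw [Finset.sum_mul]
  refine Finset.sum_le_sum fun i _ => ?_
  have := Finset.sum_mul_sq_le_sq_mul_sq Finset.univ (A i) v
  rw [← sq]
  refine this.trans (le_of_eq ?_)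
  congr 1
  exact Finset.sum_congr rfl fun j _ => by ring

lemma dot_nonneg {p : ℕ} (v : Fin p → ℝ) : 0 ≤ v ⬝ᵥ v :=
  Finset.sum_nonneg fun _ _ => mul_self_nonneg _

lemma dot_cs {p : ℕ} (u v : Fin p → ℝ) : (u ⬝ᵥ v)^2 ≤ (u ⬝ᵥ u) * (v ⬝ᵥ v) := by
  have := Finset.sum_mul_sq_le_sq_mul_sq Finset.univ u v
  simpa [dotProduct, sq] using this

lemma Fr_quad {p : ℕ} (A : Mat p) (hA : Fr A ≤ 1/4) (v : Fin p → ℝ) :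
    |v ⬝ᵥ A *ᵥ v| ≤ 1/2 * (v ⬝ᵥ v) := by
  have h1 := Fr_mulVec A v
  have h2 := dot_cs v (A *ᵥ v)
  have h3 := dot_nonneg v
  apply abs_le_of_sq_le_sq _ (by positivity)
  have : (A *ᵥ v) ⬝ᵥ (A *ᵥ v) ≤ 1/4 * (v ⬝ᵥ v) := h1.trans (by gcongr)
  nlinarith

lemma symm_dot {p : ℕ} {B : Mat p} (hB : B.IsSymm) (u v : Fin p → ℝ) :
    u ⬝ᵥ B *ᵥ v = (B *ᵥ u) ⬝ᵥ v := by
  rw [dotProduct_mulVec, ← mulVec_transpose, hB.eq]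

lemma psd_cs {p : ℕ} {B : Mat p} (hB : B.IsSymm) (hpos : ∀ v, 0 ≤ v ⬝ᵥ B *ᵥ v)
    (u s : Fin p → ℝ) (hs : 0 < s ⬝ᵥ B *ᵥ s) :
    (u ⬝ᵥ B *ᵥ s)^2 ≤ (u ⬝ᵥ B *ᵥ u) * (s ⬝ᵥ B *ᵥ s) := by
  set β := s ⬝ᵥ B *ᵥ s
  set c := u ⬝ᵥ B *ᵥ s
  have hc : s ⬝ᵥ B *ᵥ u = c := by rw [symm_dot hB, dotProduct_comm]
  have h := hpos (β • u - c • s)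
  simp only [mulVec_sub, mulVec_smul, sub_dotProduct, dotProduct_sub, smul_dotProduct,
    dotProduct_smul, hc, smul_eq_mul] at h
  change 0 ≤ β * (β * (u ⬝ᵥ B *ᵥ u) - c * c) - c * (β * c - c * β) at h
  by_contra! hcon
  nlinarith

lemma Fr_add_le {p : ℕ} (X D : Mat p) (θ : ℝ) (hθ : 0 < θ) :
    Fr (X + D) ≤ (1 + θ) * Fr X + (1 + 1/θ) * Fr D := by
  simp only [Fr, Finset.mul_sum, ← Finset.sum_add_distrib]
  refine Finset.sum_le_sum fun i _ => Finset.sum_le_sum fun j _ => ?_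
  have : (1 + θ) * X i j ^2 + (1 + 1/θ) * D i j ^2 - ((X + D) i j)^2
    = (θ * X i j - D i j)^2 / θ := by
    simp only [Matrix.add_apply]; field_simp; ring
  have : 0 ≤ (θ * X i j - D i j)^2 / θ := by positivity
  linarith

lemma exact_step {p : ℕ} (B : Mat p) (hB : B.IsSymm) (s : Fin p → ℝ) (hs : 0 < s ⬝ᵥ s)
    (hF : Fr (B - 1) ≤ 1/4) :
    Fr (B - 1 + (s ⬝ᵥ s)⁻¹ • vecMulVec s s
        + (-(s ⬝ᵥ B *ᵥ s)⁻¹) • vecMulVec (B *ᵥ s) (B *ᵥ s)) ≤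
      Fr (B - 1) - 1/3 * ((((B - 1) *ᵥ s) ⬝ᵥ ((B - 1) *ᵥ s)) / (s ⬝ᵥ s)) := by
  have hq : ∀ v, |v ⬝ᵥ B *ᵥ v - v ⬝ᵥ v| ≤ 1/2 * (v ⬝ᵥ v) := by
    intro v
    have := Fr_quad _ hF v
    rwa [sub_mulVec, one_mulVec, dotProduct_sub] at this
  have hlow : ∀ v, 1/2 * (v ⬝ᵥ v) ≤ v ⬝ᵥ B *ᵥ v := fun v => by
    have := abs_le.1 (hq v); linarith
  have hpos : ∀ v, 0 ≤ v ⬝ᵥ B *ᵥ v := fun v => by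
    have := hlow v; have := dot_nonneg v; linarith
  have hup : s ⬝ᵥ B *ᵥ s ≤ 3/2 * (s ⬝ᵥ s) := by
    have := abs_le.1 (hq s); linarith
  have hβ : 0 < s ⬝ᵥ B *ᵥ s := by have := hlow s; linarith
  rw [Fr_rank1, Fr_rank1]
  have hcs := psd_cs hB hpos (B *ᵥ s) s hβ
  have hE : 1/2 * (((B - 1) *ᵥ s) ⬝ᵥ ((B - 1) *ᵥ s)) ≤
      (B *ᵥ s) ⬝ᵥ B *ᵥ (B *ᵥ s) - 2 * ((B *ᵥ s) ⬝ᵥ (B *ᵥ s)) + s ⬝ᵥ B *ᵥ s := by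
    refine (hlow _).trans (le_of_eq ?_)
    simp only [sub_mulVec, one_mulVec, mulVec_sub, dotProduct_sub, sub_dotProduct]
    rw [symm_dot hB s (B *ᵥ s)]
    ring
  have hEn := dot_nonneg ((B - 1) *ᵥ s)
  set Q := ((B - 1) *ᵥ s) ⬝ᵥ ((B - 1) *ᵥ s)
  have e1 : s ⬝ᵥ (B - 1) *ᵥ s = s ⬝ᵥ B *ᵥ s - s ⬝ᵥ s := by
    rw [sub_mulVec, one_mulVec, dotProduct_sub]
  have e2 : (B *ᵥ s) ⬝ᵥ (B - 1 + (s ⬝ᵥ s)⁻¹ • vecMulVec s s) *ᵥ (B *ᵥ s)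
      = (B *ᵥ s) ⬝ᵥ B *ᵥ (B *ᵥ s) - (B *ᵥ s) ⬝ᵥ (B *ᵥ s) + (s ⬝ᵥ s)⁻¹ * (s ⬝ᵥ B *ᵥ s)^2 := by
    rw [add_mulVec, sub_mulVec, one_mulVec, smul_mulVec, vecMulVec_mulVec]
    simp only [dotProduct_add, dotProduct_sub, dotProduct_smul, smul_eq_mul,
      op_smul_eq_smul]
    rw [dotProduct_comm (B *ᵥ s) s]; ring
  rw [e1, e2]
  set β := s ⬝ᵥ B *ᵥ s
  set σ := s ⬝ᵥ s
  set b2 := (B *ᵥ s) ⬝ᵥ (B *ᵥ s)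
  set T := (B *ᵥ s) ⬝ᵥ B *ᵥ (B *ᵥ s)
  have hE2 : 1/3 * (Q / σ) ≤ (T - 2 * b2 + β) / β := by
    rw [le_div_iff₀ hβ]
    have : 1/3 * (Q / σ) * β ≤ 1/3 * (Q / σ) * (3/2 * σ) := by gcongr
    have h2 : 1/3 * (Q / σ) * (3/2 * σ) = 1/2 * Q := by field_simp
    linarith
  have hb : b2^2 / β^2 ≤ T / β := by
    rw [div_le_div_iff₀ (by positivity) hβ]
    nlinarith
  have key : Fr (B - 1) + 2 * σ⁻¹ * (β - σ) + σ⁻¹ ^ 2 * σ ^ 2 +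
        2 * -β⁻¹ * (T - b2 + σ⁻¹ * β ^ 2) + (-β⁻¹) ^ 2 * b2 ^ 2
      = Fr (B - 1) - (T - 2 * b2 + β) / β - (T / β - b2^2/β^2) := by
    field_simp; ring
  rw [key]
  linarith

set_option maxHeartbeats 1000000 in
lemma pert {p : ℕ} (s y : Fin p → ℝ) (hs : 0 < s ⬝ᵥ s) (θ : ℝ) (h0 : 0 < θ) (h1 : θ ≤ 1/2)
    (hy : (y - s) ⬝ᵥ (y - s) ≤ θ^2 * (s ⬝ᵥ s)) :
    Fr ((y ⬝ᵥ s)⁻¹ • vecMulVec y y - (s ⬝ᵥ s)⁻¹ • vecMulVec s s) ≤ 24 * θ^2 := by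
  have e : (y ⬝ᵥ s)⁻¹ • vecMulVec y y - (s ⬝ᵥ s)⁻¹ • vecMulVec s s =
    (0 + (y ⬝ᵥ s)⁻¹ • vecMulVec y y) + (-(s ⬝ᵥ s)⁻¹) • vecMulVec s s := by
    rw [zero_add, neg_smul, sub_eq_add_neg]
  rw [e, Fr_rank1, Fr_rank1]
  have f0 : Fr (0 : Mat p) = 0 := by simp [Fr]
  have e2 : s ⬝ᵥ (0 + (y ⬝ᵥ s)⁻¹ • vecMulVec y y) *ᵥ s = (y ⬝ᵥ s)⁻¹ * (y ⬝ᵥ s)^2 := by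
    rw [zero_add, smul_mulVec, vecMulVec_mulVec]
    simp only [dotProduct_smul, smul_eq_mul, op_smul_eq_smul]
    rw [dotProduct_comm s y]; ring
  have hcs := dot_cs (y - s) s
  have hd : (y - s) ⬝ᵥ s = y ⬝ᵥ s - s ⬝ᵥ s := sub_dotProduct _ _ _
  have hyy : y ⬝ᵥ y = (y - s) ⬝ᵥ (y - s) + 2 * ((y - s) ⬝ᵥ s) + s ⬝ᵥ s := by
    simp only [sub_dotProduct, dotProduct_sub]
    rw [dotProduct_comm s y]; ring
  have hg0 := dot_nonneg (y - s)
  have hys : y ⬝ᵥ s = (y - s) ⬝ᵥ s + s ⬝ᵥ s := by rw [hd]; ring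
  rw [f0, e2, zero_mulVec, dotProduct_zero, hyy, hys]
  generalize (y - s) ⬝ᵥ (y - s) = G at *
  generalize (y - s) ⬝ᵥ s = A at *
  generalize s ⬝ᵥ s = σ at *
  -- normalise
  obtain ⟨g, rfl⟩ : ∃ g, G = g * σ := ⟨G / σ, by field_simp⟩
  obtain ⟨a, rfl⟩ : ∃ a, A = a * σ := ⟨A / σ, by field_simp⟩
  have hg : g ≤ θ^2 := by nlinarith
  have hg0' : 0 ≤ g := by by_contra! h; nlinarith
  have ha2 : a^2 ≤ g := by
    have : a^2 * (σ * σ) ≤ g * (σ * σ) := by nlinarith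
    exact le_of_mul_le_mul_right this (by positivity)
  have ha : |a| ≤ θ := abs_le_of_sq_le_sq (ha2.trans hg) h0.le
  have ha' := abs_le.1 ha
  have hpos : 0 < 1 + a := by linarith
  have hm : a * σ + σ = (1 + a) * σ := by ring
  have hm2 : g * σ + 2 * (a * σ) + σ = (1 + 2 * a + g) * σ := by ring
  rw [hm, hm2]
  have : 0 + 2 * ((1 + a) * σ)⁻¹ * 0 + ((1 + a) * σ)⁻¹ ^ 2 * ((1 + 2 * a + g) * σ) ^ 2 +
        2 * -σ⁻¹ * (((1 + a) * σ)⁻¹ * ((1 + a) * σ) ^ 2) + (-σ⁻¹) ^ 2 * σ ^ 2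
      = (-a^2 - 2 * a^3 + 2 * g * (1 + 2 * a) + g^2) / (1 + a)^2 := by
    field_simp; ring
  rw [this, div_le_iff₀ (by positivity)]
  have h3 : -(2 * a^3) ≤ θ^2 := by
    have : -(2 * a^3) = (2 * (-a)) * a^2 := by ring
    rw [this]
    have : (2 * (-a)) * a^2 ≤ 1 * a^2 := by gcongr; linarith
    linarith
  have h4 : 2 * g * (1 + 2 * a) ≤ 4 * θ^2 := by nlinarith
  have h5 : g^2 ≤ θ^2 := by
    have : g ≤ 1 := by nlinarith
    nlinarith
  have h6 : 1/4 ≤ (1 + a)^2 := by nlinarith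
  have h7 : 24 * θ^2 * (1/4) ≤ 24 * θ^2 * (1 + a)^2 := by gcongr
  nlinarith [sq_nonneg a]

lemma step {p : ℕ} (B : Mat p) (hB : B.IsSymm) (s y : Fin p → ℝ) (hs : 0 < s ⬝ᵥ s)
    (hF : Fr (B - 1) ≤ 1/4) (θ : ℝ) (h0 : 0 < θ) (h1 : θ ≤ 1/2)
    (hy : (y - s) ⬝ᵥ (y - s) ≤ θ^2 * (s ⬝ᵥ s)) :
    Fr (B + (y ⬝ᵥ s)⁻¹ • vecMulVec y y
        - (s ⬝ᵥ B *ᵥ s)⁻¹ • vecMulVec (B *ᵥ s) (B *ᵥ s) - 1) ≤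
      Fr (B - 1) - 1/3 * ((((B - 1) *ᵥ s) ⬝ᵥ ((B - 1) *ᵥ s)) / (s ⬝ᵥ s)) + 37 * θ := by
  have e : B + (y ⬝ᵥ s)⁻¹ • vecMulVec y y
        - (s ⬝ᵥ B *ᵥ s)⁻¹ • vecMulVec (B *ᵥ s) (B *ᵥ s) - 1 =
     (B - 1 + (s ⬝ᵥ s)⁻¹ • vecMulVec s s
        + (-(s ⬝ᵥ B *ᵥ s)⁻¹) • vecMulVec (B *ᵥ s) (B *ᵥ s)) +
      ((y ⬝ᵥ s)⁻¹ • vecMulVec y y - (s ⬝ᵥ s)⁻¹ • vecMulVec s s) := by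
    rw [neg_smul]; abel
  rw [e]
  refine (Fr_add_le _ _ θ h0).trans ?_
  have hx := exact_step B hB s hs hF
  have hp := pert s y hs θ h0 h1 hy
  have hq : 0 ≤ (((B - 1) *ᵥ s) ⬝ᵥ ((B - 1) *ᵥ s)) / (s ⬝ᵥ s) :=
    div_nonneg (dot_nonneg _) hs.le
  have h2 : (1 + 1/θ) * Fr ((y ⬝ᵥ s)⁻¹ • vecMulVec y y - (s ⬝ᵥ s)⁻¹ • vecMulVec s s)
      ≤ (1 + 1/θ) * (24 * θ^2) := by gcongr
  have h3 : (1 + 1/θ) * (24 * θ^2) = 24 * θ^2 + 24 * θ := by field_simp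
  nlinarith

lemma toFn_dot {p : ℕ} (v : Vec p) : toFn v ⬝ᵥ toFn v = ‖v‖^2 := by
  rw [EuclideanSpace.norm_sq_eq]
  simp [toFn, dotProduct, sq]

lemma toFn_inner {p : ℕ} (u v : Vec p) : toFn u ⬝ᵥ toFn v = ⟪u, v⟫ := by
  simp [toFn, dotProduct, PiLp.inner_apply, mul_comm]

lemma toFn_apply {p : ℕ} (A : Mat p) (v : Vec p) : toFn (applyM A v) = A *ᵥ toFn v := by
  simp [toFn, applyM, Matrix.ofLp_toEuclideanCLM]

lemma toFn_sub {p : ℕ} (u v : Vec p) : toFn (u - v) = toFn u - toFn v := rfl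

lemma applyM_mul {p : ℕ} (A B : Mat p) (v : Vec p) : applyM (A * B) v = applyM A (applyM B v) := by
  simp [applyM, map_mul]

lemma applyM_one {p : ℕ} (v : Vec p) : applyM 1 v = v := by
  simp [applyM]

lemma applyM_sub {p : ℕ} (A : Mat p) (u v : Vec p) :
    applyM A (u - v) = applyM A u - applyM A v := by
  simp [applyM]

lemma applyM_add {p : ℕ} (A : Mat p) (u v : Vec p) :
    applyM A (u + v) = applyM A u + applyM A v := by
  simp [applyM]

lemma sub_applyM {p : ℕ} (A B : Mat p) (v : Vec p) :
    applyM (A - B) v = applyM A v - applyM B v := by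
  simp [applyM]

lemma norm_applyM_le {p : ℕ} (A : Mat p) (v : Vec p) : ‖applyM A v‖ ≤ opNorm A * ‖v‖ :=
  ContinuousLinearMap.le_opNorm _ _

lemma norm_applyM_Fr {p : ℕ} (A : Mat p) (v : Vec p) : ‖applyM A v‖^2 ≤ Fr A * ‖v‖^2 := by
  rw [← toFn_dot, ← toFn_dot, toFn_apply]
  exact Fr_mulVec A _

/-- weights: M symmetric with inverse N, bounds -/
structure Wt {p : ℕ} (M N H : Mat p) (K : ℝ) : Prop where
  sM : M.IsSymm
  sN : N.IsSymm
  sH : H.IsSymm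
  MN : M * N = 1
  NM : N * M = 1
  MHM : M * H * M = 1
  K1 : 1 ≤ K
  bM : ∀ v, ‖applyM M v‖ ≤ K * ‖v‖
  bN : ∀ v, ‖applyM N v‖ ≤ K * ‖v‖

lemma Wt.E {p : ℕ} {M N H : Mat p} {K : ℝ} (h : Wt M N H K) (B : Mat p) :
    M * (B - H) * M = M * B * M - 1 := by
  rw [mul_sub, sub_mul, h.MHM]

lemma Wt.BH {p : ℕ} {M N H : Mat p} {K : ℝ} (h : Wt M N H K) (B : Mat p) :
    N * (M * B * M) * N = B := by
  calc N * (M * B * M) * N = (N * M) * B * (M * N) := by simp only [mul_assoc]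
    _ = B := by rw [h.MN, h.NM, one_mul, mul_one]

lemma Wt.norm_N {p : ℕ} {M N H : Mat p} {K : ℝ} (h : Wt M N H K) (v : Vec p) :
    ‖v‖ ≤ K * ‖applyM N v‖ := by
  have := h.bM (applyM N v)
  rwa [← applyM_mul, h.MN, applyM_one] at this

lemma Wt.err {p : ℕ} {M N H : Mat p} {K : ℝ} (h : Wt M N H K) (B : Mat p) {η : ℝ} (hη : 0 ≤ η)
    (hF : Fr (M * (B - H) * M) ≤ η^2) (v : Vec p) :
    ‖applyM (B - H) v‖ ≤ K^2 * η * ‖v‖ := by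
  have hK := h.K1
  rw [← h.BH (B - H), applyM_mul, applyM_mul]
  have h1 := h.bN (applyM (M * (B - H) * M) (applyM N v))
  have h2 := h.bN v
  have h3 := norm_applyM_Fr (M * (B - H) * M) (applyM N v)
  have h4 : ‖applyM (M * (B - H) * M) (applyM N v)‖ ≤ η * ‖applyM N v‖ := by
    rw [← sq_le_sq₀ (norm_nonneg _) (by positivity)]
    rw [mul_pow]
    exact h3.trans (by gcongr)
  calc _ ≤ _ := h1
    _ ≤ K * (η * (K * ‖v‖)) := by gcongr; exact h4.trans (by gcongr)
    _ = _ := by ring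

lemma Wt.coer {p : ℕ} {M N H : Mat p} {K : ℝ} (h : Wt M N H K) (B : Mat p)
    (hF : Fr (M * (B - H) * M) ≤ 1/4) (v : Vec p) :
    ‖v‖^2 ≤ 2 * K^2 * ⟪v, applyM B v⟫ := by
  have hK := h.K1
  have h1 := h.norm_N v
  have h2 := (abs_le.1 (Fr_quad _ hF (toFn (applyM N v)))).1
  rw [toFn_dot, h.E, sub_mulVec, one_mulVec, dotProduct_sub, toFn_dot] at h2
  have h3 : toFn (applyM N v) ⬝ᵥ (M * B * M) *ᵥ toFn (applyM N v) = ⟪v, applyM B v⟫ := by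
    rw [← toFn_inner, toFn_apply, toFn_apply, ← symm_dot h.sN, mulVec_mulVec, mulVec_mulVec,
      h.BH]
  rw [h3] at h2
  have h5 : ‖v‖^2 ≤ (K * ‖applyM N v‖)^2 := by gcongr
  have h6 : K^2 * ‖applyM N v‖^2 ≤ K^2 * (2 * ⟪v, applyM B v⟫) := by gcongr; linarith
  nlinarith

lemma Wt.step {p : ℕ} {M N H : Mat p} {K : ℝ} (h : Wt M N H K) (B : Mat p) (hB : B.IsSymm)
    (s y : Vec p) (hs : s ≠ 0)
    (hF : Fr (M * (B - H) * M) ≤ 1/4) (τ : ℝ) (h0 : 0 < τ) (h1 : K^2 * τ ≤ 1/2)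
    (hy : ‖y - applyM H s‖ ≤ τ * ‖s‖) :
    Fr (M * (bfgsUpdate B s y - H) * M) ≤ Fr (M * (B - H) * M)
      - 1 / (3 * K^4) * (‖applyM (B - H) s‖ / ‖s‖)^2 + 37 * (K^2 * τ) := by
  have hK := h.K1
  have hK0 : 0 < K := by linarith
  have hs0 : 0 < ‖s‖ := norm_pos_iff.2 hs
  have hNs := h.norm_N s
  have hNs0 : 0 < ‖applyM N s‖ := by
    by_contra! hc
    have : K * ‖applyM N s‖ ≤ 0 := mul_nonpos_of_nonneg_of_nonpos hK0.le hc
    linarith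
  have hMB : (M * B * M).IsSymm := by
    unfold Matrix.IsSymm
    rw [transpose_mul, transpose_mul, h.sM.eq, hB.eq, mul_assoc]
  have hMs : M *ᵥ toFn (applyM N s) = toFn s := by
    rw [← toFn_apply, ← applyM_mul, h.MN, applyM_one]
  have hyd : applyM M y - applyM N s = applyM M (y - applyM H s) := by
    rw [applyM_sub]
    congr 1
    have : N = M * H := by
      calc N = (M * H * M) * N := by rw [h.MHM, one_mul]
        _ = M * H := by rw [mul_assoc, h.MN, mul_one]
    rw [← applyM_mul, ← this]
  have hst := _root_.step (M * B * M) hMB (toFn (applyM N s)) (toFn (applyM M y))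
    (by rw [toFn_dot]; positivity) (by rw [← h.E]; exact hF) (K^2 * τ) (by positivity) h1
    (by
      rw [← toFn_sub, toFn_dot, toFn_dot, hyd, ← mul_pow]
      gcongr
      calc _ ≤ K * ‖y - applyM H s‖ := h.bM _
        _ ≤ K * (τ * ‖s‖) := by gcongr
        _ ≤ K * (τ * (K * ‖applyM N s‖)) := by gcongr
        _ = _ := by ring)
  have e1 : toFn (applyM M y) ⬝ᵥ toFn (applyM N s) = dotV y s := by
    rw [toFn_apply, ← symm_dot h.sM, hMs]; rfl
  have e2 : (M * B * M) *ᵥ toFn (applyM N s) = M *ᵥ (B *ᵥ toFn s) := by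
    rw [← mulVec_mulVec, hMs, ← mulVec_mulVec]
  have e3 : toFn (applyM N s) ⬝ᵥ M *ᵥ (B *ᵥ toFn s) = quadForm B s s := by
    rw [symm_dot h.sM, hMs]; rfl
  rw [e1, e2, e3] at hst
  have o1 : ∀ u : Fin p → ℝ, ∀ A : Mat p, A.IsSymm →
      A * vecMulVec u u * A = vecMulVec (A *ᵥ u) (A *ᵥ u) := by
    intro u A hA
    rw [mul_vecMulVec, vecMulVec_mul, ← mulVec_transpose, hA.eq]
  have e4 : M * (bfgsUpdate B s y - H) * M = M * B * M
      + (dotV y s)⁻¹ • vecMulVec (toFn (applyM M y)) (toFn (applyM M y))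
      - (quadForm B s s)⁻¹ • vecMulVec (M *ᵥ (B *ᵥ toFn s)) (M *ᵥ (B *ᵥ toFn s)) - 1 := by
    rw [h.E, bfgsUpdate]
    simp only [mul_sub, mul_add, sub_mul, add_mul, mul_smul_comm, smul_mul_assoc, outer]
    rw [o1 _ B hB, o1 _ M h.sM, o1 _ M h.sM, toFn_apply]
  rw [e4]
  refine hst.trans ?_
  rw [← h.E, ← toFn_apply, toFn_dot, toFn_dot, ← div_pow]
  have e5 : applyM (B - H) s = applyM N (applyM (M * (B - H) * M) (applyM N s)) := by
    rw [← applyM_mul, ← applyM_mul, h.BH]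
  set q := applyM (M * (B - H) * M) (applyM N s)
  have hr : ‖applyM (B - H) s‖ / ‖s‖ ≤ K^2 * (‖q‖ / ‖applyM N s‖) := by
    rw [e5, ← mul_div_assoc, div_le_div_iff₀ hs0 hNs0]
    calc _ ≤ (K * ‖q‖) * (K * ‖s‖) := by gcongr <;> exact h.bN _
      _ = _ := by ring
  have hr2 : (‖applyM (B - H) s‖ / ‖s‖)^2 ≤ (K^2 * (‖q‖ / ‖applyM N s‖))^2 := by gcongr
  have hr3 : 1 / (3 * K^4) * (‖applyM (B - H) s‖ / ‖s‖)^2 ≤ 1/3 * (‖q‖ / ‖applyM N s‖)^2 := by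
    calc _ ≤ 1 / (3 * K^4) * (K^2 * (‖q‖ / ‖applyM N s‖))^2 := by gcongr
      _ = _ := by field_simp
  linarith

lemma exists_wt {p n : ℕ} (M H : Fin n → Mat p)
    (hM : ∀ i, (M i).PosDef ∧ M i * H i * M i = 1) :
    ∃ K, 1 ≤ K ∧ ∀ i, Wt (M i) (M i)⁻¹ (H i) K := by
  obtain ⟨K, hK⟩ : ∃ K, ∀ i, opNorm (M i) ≤ K ∧ opNorm (M i)⁻¹ ≤ K := by
    refine ⟨∑ i, (opNorm (M i) + opNorm (M i)⁻¹), fun i => ?_⟩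
    have hn : ∀ A : Mat p, 0 ≤ opNorm A := fun A => norm_nonneg _
    have := Finset.single_le_sum (f := fun i => opNorm (M i) + opNorm (M i)⁻¹)
      (fun j _ => add_nonneg (hn _) (hn _)) (Finset.mem_univ i)
    have h1 := hn (M i)
    have h2 := hn (M i)⁻¹
    constructor <;> linarith
  refine ⟨max K 1, le_max_right _ _, fun i => ?_⟩
  have hs : (M i).IsSymm := by
    have := (hM i).1.isHermitian
    simpa [Matrix.IsHermitian, Matrix.IsSymm, conjTranspose_eq_transpose_of_trivial] using this
  have hu : IsUnit (M i).det := (hM i).1.isUnit.map Matrix.detMonoidHom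
  have hMN := mul_nonsing_inv _ hu
  have hNM := nonsing_inv_mul _ hu
  have hsN : ((M i)⁻¹).IsSymm := by
    unfold Matrix.IsSymm
    rw [transpose_nonsing_inv, hs.eq]
  have hH : H i = (M i)⁻¹ * (M i)⁻¹ := by
    calc H i = ((M i)⁻¹ * M i) * H i * (M i * (M i)⁻¹) := by rw [hMN, hNM, one_mul, mul_one]
      _ = (M i)⁻¹ * (M i * H i * M i) * (M i)⁻¹ := by simp only [mul_assoc]
      _ = _ := by rw [(hM i).2, mul_one]
  refine ⟨hs, hsN, ?_, hMN, hNM, (hM i).2, le_max_right _ _, fun v => ?_, fun v => ?_⟩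
  · rw [hH]; unfold Matrix.IsSymm; rw [transpose_mul, hsN.eq]
  · exact (norm_applyM_le _ _).trans (by gcongr; exact (hK i).1.trans (le_max_left _ _))
  · exact (norm_applyM_le _ _).trans (by gcongr; exact (hK i).2.trans (le_max_left _ _))

lemma grad_bound {p n : ℕ} (P : IQNProblem p n) (i : Fin n) (u v : Vec p) (ρ : ℝ)
    (hu : ‖u - P.xstar‖ ≤ ρ) (hv : ‖v - P.xstar‖ ≤ ρ) :
    ‖gradient (P.f i) u - gradient (P.f i) v - applyM (P.Hess i P.xstar) (u - v)‖
      ≤ P.Ltil * ρ * ‖u - v‖ := by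
  refine (convex_closedBall P.xstar ρ).norm_image_sub_le_of_norm_hasFDerivWithin_le'
    (f := gradient (P.f i))
    (f' := fun x => Matrix.toEuclideanCLM (𝕜 := ℝ) (P.Hess i x)) (C := P.Ltil * ρ)
    (φ := Matrix.toEuclideanCLM (𝕜 := ℝ) (P.Hess i P.xstar))
    (fun x _ => (P.hHess i x).hasFDerivWithinAt) (fun x hx => ?_) ?_ ?_
  · have h1 := P.hLip i x P.xstar
    rw [opNorm, map_sub] at h1
    refine h1.trans ?_
    have := P.hLtil
    gcongr
    simpa [dist_eq_norm] using hx
  · simpa [dist_eq_norm] using hv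
  · simpa [dist_eq_norm] using hu

lemma grad_sum {p n : ℕ} (P : IQNProblem p n) : ∑ i, gradient (P.f i) P.xstar = 0 := by
  have hn : (n : ℝ) ≠ 0 := by have := P.hn; positivity
  have hd : ∀ i, HasGradientAt (P.f i) (gradient (P.f i) P.xstar) P.xstar := fun i =>
    ((P.hC2 i).differentiable (by norm_num) P.xstar).hasGradientAt
  have h1 : HasFDerivAt (fun x => (n : ℝ)⁻¹ * ∑ i, P.f i x)
      ((n : ℝ)⁻¹ • ∑ i, InnerProductSpace.toDual ℝ (Vec p) (gradient (P.f i) P.xstar)) P.xstar :=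
    (HasFDerivAt.fun_sum fun i _ => (hd i).hasFDerivAt).const_mul _
  have h2 : HasGradientAt (fun x => (n : ℝ)⁻¹ * ∑ i, P.f i x)
      ((n : ℝ)⁻¹ • ∑ i, gradient (P.f i) P.xstar) P.xstar := by
    rw [hasGradientAt_iff_hasFDerivAt]
    have key : InnerProductSpace.toDual ℝ (Vec p) ((n : ℝ)⁻¹ • ∑ i, gradient (P.f i) P.xstar) =
        (n : ℝ)⁻¹ • ∑ i, InnerProductSpace.toDual ℝ (Vec p) (gradient (P.f i) P.xstar) := by
      rw [map_smulₛₗ, map_sum]; rfl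
    rw [key]
    exact h1
  have h3 := h2.gradient
  rw [P.hopt] at h3
  exact (smul_eq_zero.1 h3.symm).resolve_left (inv_ne_zero hn)

lemma newton {p n : ℕ} (P : IQNProblem p n) (M N : Fin n → Mat p) (K : ℝ)
    (W : ∀ i, Wt (M i) (N i) (P.Hess i P.xstar) K) (S : IQNState P) (t : ℕ) (η ρ : ℝ)
    (hη : 0 ≤ η) (hη2 : η ≤ 1/2) (hρ : 0 < ρ)
    (hc : 2 * K^2 * (K^2 * η + P.Ltil * ρ) ≤ 1/2)
    (hz : ∀ i, ‖S.z i t - P.xstar‖ ≤ ρ)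
    (hF : ∀ i, Fr (M i * (S.B i t - P.Hess i P.xstar) * M i) ≤ η^2) :
    ‖S.x (t+1) - P.xstar‖ ≤ ρ / 2 := by
  have hn : (0:ℝ) < n := by have := P.hn; positivity
  have hL := P.hLtil
  have h1 : ∑ i, applyM (S.B i t) (S.x (t+1)) =
      ∑ i, applyM (S.B i t) (S.z i t) - ∑ i, gradient (P.f i) (S.z i t) := by
    have hinv := S.hinv t
    have hx := congrArg (applyM ((n : ℝ)⁻¹ • ∑ i, S.B i t)) (S.hx t)
    rw [← applyM_mul, mul_nonsing_inv _ ((isUnit_iff_isUnit_det _).1 hinv), applyM_one,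
      ← smul_sub] at hx
    have e : applyM ((n : ℝ)⁻¹ • ∑ i, S.B i t) (S.x (t+1))
        = (n : ℝ)⁻¹ • ∑ i, applyM (S.B i t) (S.x (t+1)) := by
      simp only [applyM]
      rw [map_smul, map_sum, _root_.smul_apply, _root_.sum_apply]
    rw [e] at hx
    exact smul_right_injective _ (inv_ne_zero hn.ne') hx
  set D := S.x (t+1) - P.xstar with hD
  let R : Fin n → Vec p := fun i => applyM (S.B i t) (S.z i t - P.xstar) -
    (gradient (P.f i) (S.z i t) - gradient (P.f i) P.xstar)
  have h2 : ∑ i, applyM (S.B i t) D = ∑ i, R i := by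
    simp only [R, hD, applyM_sub, Finset.sum_sub_distrib, h1, grad_sum]
    abel
  have hR : ∀ i, ‖R i‖ ≤ (K^2 * η + P.Ltil * ρ) * ρ := by
    intro i
    have e : R i = applyM (S.B i t - P.Hess i P.xstar) (S.z i t - P.xstar) -
      (gradient (P.f i) (S.z i t) - gradient (P.f i) P.xstar
        - applyM (P.Hess i P.xstar) (S.z i t - P.xstar)) := by
      simp only [R, sub_applyM]; abel
    rw [e]
    refine (norm_sub_le _ _).trans ?_
    have a1 := (W i).err (S.B i t) hη (hF i) (S.z i t - P.xstar)
    have a2 := grad_bound P i (S.z i t) P.xstar ρ (hz i) (by simpa using hρ.le)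
    have a3 := hz i
    calc _ ≤ K^2 * η * ‖S.z i t - P.xstar‖ + P.Ltil * ρ * ‖S.z i t - P.xstar‖ := add_le_add a1 a2
      _ = (K^2 * η + P.Ltil * ρ) * ‖S.z i t - P.xstar‖ := by ring
      _ ≤ _ := by gcongr
  have hcoer : ∑ _i : Fin n, ‖D‖^2 ≤ 2 * K^2 * ∑ i, ⟪D, applyM (S.B i t) D⟫ := by
    rw [Finset.mul_sum]
    exact Finset.sum_le_sum fun i _ => (W i).coer _ ((hF i).trans (by nlinarith)) D
  rw [← inner_sum, h2, inner_sum] at hcoer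
  have hR2 : ∑ i, ⟪D, R i⟫ ≤ ∑ _i : Fin n, ‖D‖ * ((K^2 * η + P.Ltil * ρ) * ρ) :=
    Finset.sum_le_sum fun i _ => (real_inner_le_norm _ _).trans (by gcongr; exact hR i)
  simp only [Finset.sum_const, Finset.card_univ, Fintype.card_fin, nsmul_eq_mul] at hcoer hR2
  have h5 : n * ‖D‖^2 ≤ 2 * K^2 * (n * (‖D‖ * ((K^2 * η + P.Ltil * ρ) * ρ))) :=
    hcoer.trans (by gcongr)
  have h6 : ‖D‖^2 ≤ ‖D‖ * (ρ / 2) := by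
    have : n * ‖D‖^2 ≤ n * (‖D‖ * (ρ / 2)) := by
      refine h5.trans ?_
      have : 2 * K^2 * (n * (‖D‖ * ((K^2 * η + P.Ltil * ρ) * ρ)))
        = (n * ‖D‖ * ρ) * (2 * K^2 * (K^2 * η + P.Ltil * ρ)) := by ring
      rw [this]
      calc _ ≤ (n * ‖D‖ * ρ) * (1/2) := by gcongr
        _ = _ := by ring
    exact le_of_mul_le_mul_left this hn
  by_contra! hcon
  nlinarith [norm_nonneg D]

/-- number of updates of `j` before time `t` -/
def cnt {n : ℕ} (j : Fin n) (t : ℕ) : ℕ := t / n + if j.1 < t % n then 1 else 0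

lemma succ_cases {n : ℕ} (hn : 1 ≤ n) (t : ℕ) :
    (t % n + 1 = n ∧ (t+1) / n = t / n + 1 ∧ (t+1) % n = 0) ∨
    (t % n + 1 < n ∧ (t+1) / n = t / n ∧ (t+1) % n = t % n + 1) := by
  have h1 := Nat.mod_lt t hn
  have h2 := Nat.div_add_mod t n
  rcases Nat.lt_or_ge (t % n + 1) n with h | h
  · right
    refine ⟨h, ?_⟩
    apply (Nat.div_mod_unique hn).2
    exact ⟨by omega, h⟩
  · left
    have h3 : t % n + 1 = n := by omega
    refine ⟨h3, ?_⟩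
    apply (Nat.div_mod_unique hn).2
    refine ⟨?_, hn⟩
    rw [mul_add]; omega

lemma cnt_cyc {n : ℕ} (hn : 1 ≤ n) (t : ℕ) : cnt (cyc hn t) t = t / n := by
  simp [cnt, cyc]

lemma cnt_cyc_succ {n : ℕ} (hn : 1 ≤ n) (t : ℕ) : cnt (cyc hn t) (t+1) = t / n + 1 := by
  rcases succ_cases hn t with ⟨h1, h2, h3⟩ | ⟨h1, h2, h3⟩ <;> simp [cnt, cyc, h2, h3]

lemma cnt_ne {n : ℕ} (hn : 1 ≤ n) (t : ℕ) (j : Fin n) (hj : j ≠ cyc hn t) :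
    cnt j (t+1) = cnt j t := by
  have hj' : j.1 ≠ t % n := fun h => hj (Fin.ext h)
  have := j.2
  rcases succ_cases hn t with ⟨h1, h2, h3⟩ | ⟨h1, h2, h3⟩
  · have : j.1 < t % n := by omega
    simp [cnt, h2, h3, this]
  · have : (j.1 < t % n + 1) ↔ (j.1 < t % n) := by omega
    simp [cnt, h2, h3, this]

lemma update {p n : ℕ} (P : IQNProblem p n) (M N : Fin n → Mat p) (K : ℝ)
    (W : ∀ i, Wt (M i) (N i) (P.Hess i P.xstar) K) (S : IQNState P) (t : ℕ) (ρ : ℝ)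
    (hρ : 0 < ρ) (hc : K^2 * (P.Ltil * ρ) ≤ 1/2) (j : Fin n) (hj : j = cyc P.hn t)
    (hz : ‖S.z j t - P.xstar‖ ≤ ρ) (hz' : ‖S.z j (t+1) - P.xstar‖ ≤ ρ)
    (hF : Fr (M j * (S.B j t - P.Hess j P.xstar) * M j) ≤ 1/4) :
    Fr (M j * (S.B j (t+1) - P.Hess j P.xstar) * M j) ≤
      Fr (M j * (S.B j t - P.Hess j P.xstar) * M j)
      - 1 / (3 * K^4) * (‖applyM (S.B j t - P.Hess j P.xstar) (S.z j (t+1) - S.z j t)‖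
          / ‖S.z j (t+1) - S.z j t‖)^2 + 37 * (K^2 * (P.Ltil * ρ)) := by
  subst hj
  rw [S.hBupd t]
  exact (W _).step _ (S.hsym _ _) _ _ (S.hs t) hF _ (mul_pos P.hLtil hρ) hc
    (grad_bound P _ _ _ ρ hz' hz)

lemma tendsto_of_potential (Φ g : ℕ → ℝ) (hΦ : ∀ t, 0 ≤ Φ t) (hg : ∀ t, 0 ≤ g t)
    (h : ∀ t, Φ (t+1) ≤ Φ t - g t) : Tendsto g atTop (nhds 0) := by
  have : ∀ m, ∑ t ∈ Finset.range m, g t ≤ Φ 0 - Φ m := by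
    intro m
    induction m with
    | zero => simp
    | succ k ih => rw [Finset.sum_range_succ]; linarith [h k]
  exact (summable_of_sum_range_le hg fun m => (this m).trans
    (sub_le_self _ (hΦ m))).tendsto_atTop_zero

lemma invariant {p n : ℕ} (P : IQNProblem p n) (M N : Fin n → Mat p) (K η ε : ℝ)
    (W : ∀ i, Wt (M i) (N i) (P.Hess i P.xstar) K) (S : IQNState P)
    (hη : 0 < η) (hη2 : η ≤ 1/2) (hε : 0 < ε) (hKη : K^4 * η = 1/8)
    (hKε : 148 * (K^2 * (P.Ltil * ε)) = η^2)
    (h0 : ‖S.x 0 - P.xstar‖ < ε)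
    (hB0 : ∀ i, Fr (M i * (S.B i 0 - P.Hess i P.xstar) * M i) ≤ η^2/2) (t : ℕ) :
    ∀ j, ‖S.z j t - P.xstar‖ ≤ ε * (1/2)^(cnt j t) ∧
      Fr (M j * (S.B j t - P.Hess j P.xstar) * M j) ≤ η^2 - η^2/2 * (1/2)^(cnt j t) ∧
      ‖S.x (t+1) - P.xstar‖ ≤ ε * (1/2)^(t/n) / 2 := by
  have hL := P.hLtil
  have hpow : ∀ k : ℕ, ((1:ℝ)/2)^k ≤ 1 := fun k => pow_le_one₀ (by norm_num) (by norm_num)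
  have newt : ∀ t, (∀ j, ‖S.z j t - P.xstar‖ ≤ ε * (1/2)^(cnt j t) ∧
      Fr (M j * (S.B j t - P.Hess j P.xstar) * M j) ≤ η^2 - η^2/2 * (1/2)^(cnt j t)) →
      ‖S.x (t+1) - P.xstar‖ ≤ ε * (1/2)^(t/n) / 2 := by
    intro t ih
    apply newton P M N K W S t η (ε * (1/2)^(t/n)) hη.le hη2 (by positivity)
    · have h1 : K^2 * (P.Ltil * (ε * (1/2)^(t/n))) ≤ K^2 * (P.Ltil * ε) := by
        gcongr; exact mul_le_of_le_one_right hε.le (hpow _)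
      nlinarith
    · intro i
      refine (ih i).1.trans ?_
      gcongr ?_ * ?_
      exact pow_le_pow_of_le_one (by norm_num) (by norm_num) (Nat.le_add_right _ _)
    · intro i
      refine (ih i).2.trans ?_
      have : 0 ≤ η^2/2 * (1/2)^(cnt i t) := by positivity
      linarith
  suffices H : ∀ j, ‖S.z j t - P.xstar‖ ≤ ε * (1/2)^(cnt j t) ∧
      Fr (M j * (S.B j t - P.Hess j P.xstar) * M j) ≤ η^2 - η^2/2 * (1/2)^(cnt j t) from
    fun j => ⟨(H j).1, (H j).2, newt t H⟩
  induction t with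
  | zero =>
    intro j
    have : cnt j 0 = 0 := by simp [cnt]
    rw [this, S.hz0]
    refine ⟨by simpa using h0.le, (hB0 j).trans (by linarith)⟩
  | succ t ih =>
    intro j
    by_cases hj : j = cyc P.hn t
    · have hx := newt t ih
      have hc1 : cnt j t = t / n := by rw [hj, cnt_cyc]
      have hc2 : cnt j (t+1) = t / n + 1 := by rw [hj, cnt_cyc_succ]
      have hz : S.z j (t+1) = S.x (t+1) := by rw [hj, S.hzupd]
      obtain ⟨i1, i2⟩ := ih j
      rw [hc1] at i1 i2
      have hp : (0:ℝ) < (1/2)^(t/n) := by positivity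
      have hp1 := hpow (t/n)
      rw [hc2, pow_succ]
      set r : ℝ := (1/2)^(t/n)
      have hεr : 0 < ε * r := by positivity
      refine ⟨by rw [hz]; linarith, ?_⟩
      have hs : K^2 * (P.Ltil * (ε * r)) = η^2 / 148 * r := by rw [← hKε]; ring
      have hu := update P M N K W S t (ε * r) hεr (by rw [hs]; nlinarith) j hj i1
        (by rw [hz]; linarith) (by nlinarith)
      rw [hs] at hu
      have : 0 ≤ 1 / (3 * K^4) * (‖applyM (S.B j t - P.Hess j P.xstar) (S.z j (t+1) - S.z j t)‖
          / ‖S.z j (t+1) - S.z j t‖)^2 := by positivity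
      linarith
    · rw [cnt_ne P.hn t j hj, S.hzfix t j hj, S.hBfix t j hj]
      exact ih j

/-- Proposition 1 of the paper: locally, for every `i` the Dennis–Moré
condition holds for `f_i` along its update steps `t_k = i + k·n` (the iterations at
which the cyclic index equals `i`). -/
theorem stmt6 {p n : ℕ} (P : IQNProblem p n) (M : Fin n → Mat p)
    (hM : ∀ i, (M i).PosDef ∧ M i * P.Hess i P.xstar * M i = 1) :
    ∃ ε > (0:ℝ), ∃ δ > (0:ℝ), ∀ S : IQNState P,
      ‖S.x 0 - P.xstar‖ < ε →
      (∀ i, wNorm (M i) (S.B i 0 - P.Hess i P.xstar) < δ) →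
      ∀ i : Fin n,
        Tendsto (fun k : ℕ =>
            ‖applyM (S.B i (i.1 + k*n) - P.Hess i P.xstar)
                (S.z i (i.1 + k*n + 1) - S.z i (i.1 + k*n))‖ /
              ‖S.z i (i.1 + k*n + 1) - S.z i (i.1 + k*n)‖)
          atTop (nhds 0) := by
  obtain ⟨K, hK1, W⟩ := exists_wt M (fun i => P.Hess i P.xstar) hM
  have hL := P.hLtil
  have hK0 : 0 < K := by linarith
  obtain ⟨η, hη, hKη⟩ : ∃ η : ℝ, 0 < η ∧ K^4 * η = 1/8 :=
    ⟨1 / (8 * K^4), by positivity, by field_simp⟩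
  have hη2 : η ≤ 1/2 := by
    have : 1 ≤ K^4 := one_le_pow₀ hK1
    nlinarith
  obtain ⟨ε, hε, hKε⟩ : ∃ ε : ℝ, 0 < ε ∧ 148 * (K^2 * (P.Ltil * ε)) = η^2 :=
    ⟨η^2 / (148 * K^2 * P.Ltil), by positivity, by field_simp⟩
  refine ⟨ε, hε, η/2, by positivity, fun S h0 hB i => ?_⟩
  have hB0 : ∀ i, Fr (M i * (S.B i 0 - P.Hess i P.xstar) * M i) ≤ η^2/2 := by
    intro i
    have h1 := hB i
    have h2 : wNorm (M i) (S.B i 0 - P.Hess i P.xstar) =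
      Real.sqrt (Fr (M i * (S.B i 0 - P.Hess i P.xstar) * M i)) := rfl
    rw [h2, Real.sqrt_lt' (by positivity)] at h1
    nlinarith
  have inv := invariant P M (fun i => (M i)⁻¹) K η ε W S hη hη2 hε hKη hKε h0 hB0
  have hn := P.hn
  let q : ℕ → ℝ := fun t => ‖applyM (S.B i t - P.Hess i P.xstar) (S.z i (t+1) - S.z i t)‖
          / ‖S.z i (t+1) - S.z i t‖
  let g : ℕ → ℝ := fun t => if i = cyc P.hn t then 1 / (3 * K^4) * (q t)^2 else 0
  have hg : Tendsto g atTop (nhds 0) := by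
    refine tendsto_of_potential (fun t => Fr (M i * (S.B i t - P.Hess i P.xstar) * M i)
      + η^2/2 * (1/2)^(cnt i t)) g (fun t => ?_) (fun t => ?_) (fun t => ?_)
    · have := Fr_nonneg (M i * (S.B i t - P.Hess i P.xstar) * M i)
      positivity
    · simp only [g]; split_ifs <;> positivity
    · by_cases hj : i = cyc P.hn t
      · have hc1 : cnt i t = t / n := by rw [hj, cnt_cyc]
        have hc2 : cnt i (t+1) = t / n + 1 := by rw [hj, cnt_cyc_succ]
        have hz : S.z i (t+1) = S.x (t+1) := by
          have := S.hzupd t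
          rwa [← hj] at this
        obtain ⟨i1, i2, hx⟩ := inv t i
        have hp : (0:ℝ) < (1/2)^(t/n) := by positivity
        have hp1 : ((1:ℝ)/2)^(t/n) ≤ 1 := pow_le_one₀ (by norm_num) (by norm_num)
        have hgt : g t = 1 / (3 * K^4) * (q t)^2 := if_pos hj
        simp only [hgt]
        rw [hc1] at i1 i2
        rw [hc1, hc2, pow_succ ((1:ℝ)/2)]
        set r : ℝ := (1/2)^(t/n)
        have hεr : 0 < ε * r := by positivity
        have hs : K^2 * (P.Ltil * (ε * r)) = η^2 / 148 * r := by rw [← hKε]; ring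
        have hu := update P M (fun i => (M i)⁻¹) K W S t (ε * r) hεr (by rw [hs]; nlinarith) i hj i1
          (by rw [hz]; linarith) (by nlinarith)
        rw [hs] at hu
        change _ ≤ _ - 1 / (3 * K^4) * (q t)^2 + _ at hu
        linarith
      · have hgt : g t = 0 := if_neg hj
        simp only [hgt]
        rw [cnt_ne P.hn t i hj, S.hBfix t i hj, sub_zero]
  have ht : Tendsto (fun k : ℕ => i.1 + k * n) atTop atTop :=
    tendsto_atTop_mono (fun k => by simp only [id]; nlinarith) tendsto_id
  have hgk := hg.comp ht
  have hq : ∀ k : ℕ, g (i.1 + k * n) = 1 / (3 * K^4) * (q (i.1 + k * n))^2 := by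
    intro k
    refine if_pos (Fin.ext ?_)
    simp [cyc, Nat.mod_eq_of_lt i.2]
  have h3 : Tendsto (fun k : ℕ => Real.sqrt (3 * K^4 * g (i.1 + k * n))) atTop (nhds 0) := by
    have := (hgk.const_mul (3 * K^4)).sqrt
    simpa using this
  refine h3.congr fun k => ?_
  rw [hq]
  have : 3 * K^4 * (1 / (3 * K^4) * (q (i.1 + k * n))^2) = (q (i.1 + k * n))^2 := by
    field_simp
  rw [this, Real.sqrt_sq (by positivity)]

end
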